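/- One has 4 ∫_{v=-2}^{-2/3} ( (2 + 4v + 3v²)/(1 + 2v)² ) · √( −(1 + 2v + 3v²) / ((2+v)(2+3v)) ) dv = (4/3) · ( 9 E(1/9) − 8 K(1/9) + 8 Π(−1/3, 1/9) ), where E(μ) = ∫₀^{π/2} √(1 − μ sin²θ) dθ, K(μ) = ∫₀^{π/2} dθ/√(1 − μ sin²θ), and Π(ν, μ) = ∫₀^{π/2} dθ / ( (1 − ν sin²θ) √(1 − μ sin²θ) ) are the complete elliptic integrals of the second, first, and third kinds. -/

import Mathlib

open Real

/-- Complete elliptic integral of the second kind. -/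
noncomputable def ellipticE (μ : ℝ) : ℝ :=
  ∫ θ in (0 : ℝ)..(Real.pi / 2), Real.sqrt (1 - μ * Real.sin θ ^ 2)

/-- Complete elliptic integral of the first kind. -/
noncomputable def ellipticK (μ : ℝ) : ℝ :=
  ∫ θ in (0 : ℝ)..(Real.pi / 2), 1 / Real.sqrt (1 - μ * Real.sin θ ^ 2)

/-- Complete elliptic integral of the third kind. -/
noncomputable def ellipticPi (ν μ : ℝ) : ℝ :=
  ∫ θ in (0 : ℝ)..(Real.pi / 2),
    1 / ((1 - ν * Real.sin θ ^ 2) * Real.sqrt (1 - μ * Real.sin θ ^ 2))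

theorem aux_image : (fun θ : ℝ => -2 / (2 - cos θ)) '' Set.Ioo 0 π = Set.Ioo (-2 : ℝ) (-2/3) := by
  ext v
  constructor
  · rintro ⟨θ, ⟨h0, h1⟩, rfl⟩
    have hs : 0 < sin θ := sin_pos_of_pos_of_lt_pi h0 h1
    have hsc := sin_sq_add_cos_sq θ
    have hc1 : cos θ < 1 := by nlinarith
    have hc2 : -1 < cos θ := by nlinarith
    constructor
    · show -2 < -2 / (2 - cos θ)
      rw [lt_div_iff₀ (by linarith)]; linarith
    · show -2 / (2 - cos θ) < -2/3
      rw [div_lt_iff₀ (by linarith)]; linarith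
  · rintro ⟨h0, h1⟩
    have hv : v < 0 := by linarith
    have e1 : 2 + 2 / v < 1 := by
      have : 2 / v < -1 := by rw [div_lt_iff_of_neg hv]; linarith
      linarith
    have e2 : -1 < 2 + 2 / v := by
      have : -3 < 2 / v := by rw [lt_div_iff_of_neg hv]; linarith
      linarith
    refine ⟨arccos (2 + 2 / v), ⟨arccos_pos.2 e1, ?_⟩, ?_⟩
    · refine lt_of_le_of_ne (arccos_le_pi _) fun h => ?_
      rw [arccos_eq_pi] at h; linarith
    · show -2 / (2 - cos (arccos (2 + 2 / v))) = v
      rw [cos_arccos e2.le e1.le]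
      have : v ≠ 0 := hv.ne
      field_simp
      ring

theorem aux_subst :
    (∫ v in (-2 : ℝ)..(-2/3),
        ((2 + 4 * v + 3 * v ^ 2) / (1 + 2 * v) ^ 2)
          * Real.sqrt (-(1 + 2 * v + 3 * v ^ 2) / ((2 + v) * (2 + 3 * v)))) =
    ∫ θ in (0:ℝ)..π, 2 * (1 - sin θ ^ 2 / 3) / (1 + sin θ ^ 2 / 3) ^ 2
      * √(1 - 1/9 * sin θ ^ 2) := by
  rw [intervalIntegral.integral_of_le (by norm_num), intervalIntegral.integral_of_le pi_pos.le,
    MeasureTheory.integral_Ioc_eq_integral_Ioo, MeasureTheory.integral_Ioc_eq_integral_Ioo,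
    ← aux_image]
  rw [MeasureTheory.integral_image_eq_integral_abs_deriv_smul
    (f' := fun θ => 2 * sin θ / (2 - cos θ) ^ 2) measurableSet_Ioo]
  · refine MeasureTheory.setIntegral_congr_fun measurableSet_Ioo ?_
    rintro θ ⟨h0, h1⟩
    have hs : 0 < sin θ := sin_pos_of_pos_of_lt_pi h0 h1
    have hsc := sin_sq_add_cos_sq θ
    have hc1 : cos θ < 1 := by nlinarith
    have hc2 : -1 < cos θ := by nlinarith
    have hd : 0 < 2 - cos θ := by linarith
    have hd2 : 0 < 2 + cos θ := by linarith
    simp only [smul_eq_mul]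
    rw [abs_of_pos (by positivity)]
    have hS : sin θ ^ 2 = 1 - cos θ ^ 2 := by linarith
    have key : -(1 + 2 * (-2 / (2 - cos θ)) + 3 * (-2 / (2 - cos θ)) ^ 2) /
        ((2 + -2 / (2 - cos θ)) * (2 + 3 * (-2 / (2 - cos θ)))) =
        (3 / 2 / sin θ) ^ 2 * (1 - 1/9 * sin θ ^ 2) := by
      rw [mul_comm ((3 / 2 / sin θ) ^ 2), div_pow, hS]
      have n1 : 2 + -2 / (2 - cos θ) = 2 * (1 - cos θ) / (2 - cos θ) := by field_simp; ring
      have n2 : 2 + 3 * (-2 / (2 - cos θ)) = -2 * (1 + cos θ) / (2 - cos θ) := by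
        field_simp; ring
      have n3 : 1 - cos θ ^ 2 = (1 - cos θ) * (1 + cos θ) := by ring
      have p1 : 1 - cos θ ≠ 0 := by linarith
      have p2 : 1 + cos θ ≠ 0 := by linarith
      rw [n1, n2, n3]
      field_simp
      ring_nf
      linear_combination (9 * cos θ ^ 2 + 72) * hsc
    rw [key, sqrt_mul (sq_nonneg _), sqrt_sq (by positivity)]
    have n4 : 1 + 2 * (-2 / (2 - cos θ)) = -(2 + cos θ) / (2 - cos θ) := by field_simp; ring
    have n5 : 1 + sin θ ^ 2 / 3 = (2 - cos θ) * (2 + cos θ) / 3 := by rw [hS]; ring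
    have n6 : 1 - sin θ ^ 2 / 3 = (2 + cos θ ^ 2) / 3 := by rw [hS]; ring
    rw [n4, n5, n6]
    generalize √(1 - 1/9 * sin θ ^ 2) = D
    field_simp
    ring
  · rintro θ -
    have hd : 2 - cos θ ≠ 0 := by linarith [cos_le_one θ]
    have := ((hasDerivAt_const θ (-2:ℝ)).div ((hasDerivAt_const θ (2:ℝ)).sub (hasDerivAt_cos θ)) hd)
    refine HasDerivAt.hasDerivWithinAt (this.congr_deriv ?_)
    simp
  · rintro a ⟨ha, ha'⟩ b ⟨hb, hb'⟩ hab
    refine injOn_cos ⟨ha.le, ha'.le⟩ ⟨hb.le, hb'.le⟩ ?_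
    have h1 : 2 - cos a ≠ 0 := by linarith [cos_le_one a]
    have h2 : 2 - cos b ≠ 0 := by linarith [cos_le_one b]
    simp only at hab
    rw [div_eq_div_iff h1 h2] at hab
    linarith

theorem aux_pos (θ : ℝ) : 0 < 1 - 1/9 * sin θ ^ 2 := by
  nlinarith [sin_sq_add_cos_sq θ, sq_nonneg (cos θ)]

theorem aux_pos2 (θ : ℝ) : 0 < 1 - -1/3 * sin θ ^ 2 := by
  nlinarith [sq_nonneg (sin θ)]

theorem aux_cont : Continuous fun θ : ℝ => 2 * (1 - sin θ ^ 2 / 3) / (1 + sin θ ^ 2 / 3) ^ 2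
      * √(1 - 1/9 * sin θ ^ 2) := by
  have : ∀ θ : ℝ, (1 + sin θ ^ 2 / 3) ^ 2 ≠ 0 := fun θ => by positivity
  fun_prop (disch := assumption)

theorem aux_half :
    (∫ θ in (0:ℝ)..π, 2 * (1 - sin θ ^ 2 / 3) / (1 + sin θ ^ 2 / 3) ^ 2
      * √(1 - 1/9 * sin θ ^ 2)) =
    2 * ∫ θ in (0:ℝ)..(π/2), 2 * (1 - sin θ ^ 2 / 3) / (1 + sin θ ^ 2 / 3) ^ 2
      * √(1 - 1/9 * sin θ ^ 2) := by
  have hc := aux_cont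
  rw [← intervalIntegral.integral_add_adjacent_intervals (b := π/2)
    (hc.intervalIntegrable _ _) (hc.intervalIntegrable _ _), two_mul]
  congr 1
  have := intervalIntegral.integral_comp_sub_left (a := 0) (b := π/2)
    (fun θ : ℝ => 2 * (1 - sin θ ^ 2 / 3) / (1 + sin θ ^ 2 / 3) ^ 2
      * √(1 - 1/9 * sin θ ^ 2)) π
  simp only [sin_pi_sub, sub_zero] at this
  rw [this]
  congr 1
  ring

theorem aux_deriv (θ : ℝ) :
    HasDerivAt (fun θ : ℝ => sin θ * cos θ * √(1 - 1/9 * sin θ ^ 2) / (1 - -1/3 * sin θ ^ 2))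
      (2 * (2 * (1 - sin θ ^ 2 / 3) / (1 + sin θ ^ 2 / 3) ^ 2 * √(1 - 1/9 * sin θ ^ 2))
        - (3 * √(1 - 1/9 * sin θ ^ 2) - 8/3 * (1 / √(1 - 1/9 * sin θ ^ 2))
          + 8/3 * (1 / ((1 - -1/3 * sin θ ^ 2) * √(1 - 1/9 * sin θ ^ 2))))) θ := by
  have hp := aux_pos θ
  have hq := aux_pos2 θ
  have hs2 := (hasDerivAt_sin θ).pow 2
  have hD := ((hs2.const_mul (1/9)).const_sub 1).sqrt hp.ne'
  have hN := ((hs2.const_mul (-1/3)).const_sub 1)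
  have := ((((hasDerivAt_sin θ).mul (hasDerivAt_cos θ)).mul hD).div hN hq.ne')
  refine this.congr_deriv ?_
  simp only [Pi.mul_apply, Pi.pow_apply]
  have n : 1 + sin θ ^ 2 / 3 = 1 - -1/3 * sin θ ^ 2 := by ring
  rw [n]
  have hc : cos θ ^ 2 = 1 - sin θ ^ 2 := by linarith [sin_sq_add_cos_sq θ]
  have hDp : 0 < √(1 - 1/9 * sin θ ^ 2) := sqrt_pos.2 hp
  have hDs : √(1 - 1/9 * sin θ ^ 2) ^ 2 = 1 - 1/9 * sin θ ^ 2 := sq_sqrt hp.le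
  generalize √(1 - 1/9 * sin θ ^ 2) = D at *
  generalize sin θ = s at *
  generalize cos θ = c at *
  have hq' : 3 + s ^ 2 ≠ 0 := by positivity
  have n' : 1 - -1/3 * s ^ 2 = (3 + s ^ 2) / 3 := by ring
  rw [n']
  simp only [Nat.cast_ofNat, show 2 - 1 = 1 from rfl, pow_one]
  field_simp
  rw [hc, hDs]
  ring

theorem surface_area_example_three :
    4 * (∫ v in (-2 : ℝ)..(-2/3),
        ((2 + 4 * v + 3 * v ^ 2) / (1 + 2 * v) ^ 2)
          * Real.sqrt (-(1 + 2 * v + 3 * v ^ 2) / ((2 + v) * (2 + 3 * v)))) =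
      (4 / 3) * (9 * ellipticE (1/9) - 8 * ellipticK (1/9) + 8 * ellipticPi (-1/3) (1/9)) := by
  rw [aux_subst, aux_half]
  unfold ellipticE ellipticK ellipticPi
  have hne : ∀ θ : ℝ, √(1 - 1/9 * sin θ ^ 2) ≠ 0 := fun θ => (sqrt_pos.2 (aux_pos θ)).ne'
  have hne2 : ∀ θ : ℝ, (1 - -1/3 * sin θ ^ 2) * √(1 - 1/9 * sin θ ^ 2) ≠ 0 :=
    fun θ => mul_ne_zero (aux_pos2 θ).ne' (hne θ)
  have cE : Continuous fun θ : ℝ => √(1 - 1/9 * sin θ ^ 2) := by fun_prop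
  have cK : Continuous fun θ : ℝ => 1 / √(1 - 1/9 * sin θ ^ 2) := by
    fun_prop (disch := assumption)
  have cP : Continuous fun θ : ℝ => 1 / ((1 - -1/3 * sin θ ^ 2) * √(1 - 1/9 * sin θ ^ 2)) := by
    fun_prop (disch := assumption)
  have c1 := aux_cont.const_mul 2
  have cE' := cE.const_mul 3
  have cK' := cK.const_mul (8/3)
  have cP' := cP.const_mul (8/3)
  have cEK : Continuous fun θ : ℝ => 3 * √(1 - 1/9 * sin θ ^ 2)
      - 8/3 * (1 / √(1 - 1/9 * sin θ ^ 2)) := cE'.sub cK'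
  have c2 : Continuous fun θ : ℝ => 3 * √(1 - 1/9 * sin θ ^ 2)
      - 8/3 * (1 / √(1 - 1/9 * sin θ ^ 2))
      + 8/3 * (1 / ((1 - -1/3 * sin θ ^ 2) * √(1 - 1/9 * sin θ ^ 2))) := cEK.add cP'
  have h := intervalIntegral.integral_eq_sub_of_hasDerivAt (a := 0) (b := π/2)
    (fun θ _ => aux_deriv θ) ((c1.sub c2).intervalIntegrable _ _)
  rw [intervalIntegral.integral_sub (c1.intervalIntegrable _ _) (c2.intervalIntegrable _ _),
    intervalIntegral.integral_add (cEK.intervalIntegrable _ _) (cP'.intervalIntegrable _ _),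
    intervalIntegral.integral_sub (cE'.intervalIntegrable _ _) (cK'.intervalIntegrable _ _)] at h
  simp only [intervalIntegral.integral_const_mul, cos_pi_div_two, sin_zero, mul_zero, zero_mul,
    zero_div, sub_zero] at h
  linarith
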